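/- Let (λ_k, z_k, z̃_k, ε_k) be NE-HPE sequences for T with parameter σ, distance generating function w ∈ 𝒟_Z(m,M), and initial point z₀ ∈ Z, and set r_k := (1/λ_k)(∇w(z_{k−1}) − ∇w(z_k)). Then for every k ≥ 1 and every z* with 0 ∈ T(z*): (dw)_{z_{k−1}}(z*) − (dw)_{z_k}(z*) − (1−σ)(dw)_{z_{k−1}}(z̃_k) ≥ λ_k[⟨r_k, z̃_k − z*⟩ + ε_k] ≥ 0. As a consequence: (a) the sequence k ↦ (dw)_{z_k}(z*) is non-increasing; (b) λ_k[⟨r_k, z̃_k − z*⟩ + ε_k] → 0 as k → ∞; and (c) (1−σ) Σ_{i=1}^{k} (dw)_{z_{i−1}}(z̃_i) ≤ (dw)_{z₀}(z*) for every k. -/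

import Mathlib

open RealInnerProductSpace Filter

/-- The dual (extended) seminorm of a seminorm `p`:
`‖v‖_* = sup { ⟪v, z⟫ : p z ≤ 1 }`, valued in `[-∞, ∞]`. -/
noncomputable def dualSN {E : Type*} [NormedAddCommGroup E] [InnerProductSpace ℝ E]
    (p : E → ℝ) (v : E) : EReal :=
  ⨆ z : {z : E // p z ≤ 1}, ((⟪v, z.1⟫ : ℝ) : EReal)

/-- The Bregman distance `(dw)_z(z') := w(z') - w(z) - ⟪∇w(z), z' - z⟫`
associated with `w`, whose gradient is `gw`. -/
noncomputable def breg {E : Type*} [NormedAddCommGroup E] [InnerProductSpace ℝ E]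
    (w : E → ℝ) (gw : E → E) (z z' : E) : ℝ :=
  w z' - w z - ⟪gw z, z' - z⟫

/-- `w ∈ 𝒟_Z(m, M)`: `w` is differentiable on `Z` with gradient `gw`, is `m`-strongly
convex with respect to the seminorm `p` on `Z`, and `gw` is `M`-Lipschitz from `p` to the
dual seminorm of `p` on `Z`. -/
structure IsDGF {E : Type*} [NormedAddCommGroup E] [InnerProductSpace ℝ E]
    [FiniteDimensional ℝ E]
    (Z : Set E) (p : Seminorm ℝ E) (m M : ℝ) (w : E → ℝ) (gw : E → E) : Prop where
  diff : ∀ z ∈ Z, HasGradientAt w (gw z) z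
  strconv : ∀ z ∈ Z, ∀ z' ∈ Z, m / 2 * (p (z - z'))^2 ≤ w z' - w z - ⟪gw z, z' - z⟫
  lips : ∀ z ∈ Z, ∀ z' ∈ Z, dualSN ⇑p (gw z - gw z') ≤ ((M * p (z - z') : ℝ) : EReal)

/-- A set-valued operator `T : E ⇉ E` is monotone. -/
def MonoOp {E : Type*} [NormedAddCommGroup E] [InnerProductSpace ℝ E]
    (T : E → Set E) : Prop :=
  ∀ z z' t t' : E, t ∈ T z → t' ∈ T z' → 0 ≤ ⟪z - z', t - t'⟫

/-- A set-valued operator `T : E ⇉ E` is maximal monotone. -/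
def MaxMonoOp {E : Type*} [NormedAddCommGroup E] [InnerProductSpace ℝ E]
    (T : E → Set E) : Prop :=
  MonoOp T ∧ ∀ T' : E → Set E, MonoOp T' → (∀ z, T z ⊆ T' z) → T' = T

/-- The ε-enlargement `T^[ε]` of a monotone operator `T`. -/
def epsEnl {E : Type*} [NormedAddCommGroup E] [InnerProductSpace ℝ E]
    (T : E → Set E) (ε : ℝ) (z : E) : Set E :=
  {t | ∀ z' t' : E, t' ∈ T z' → -ε ≤ ⟪t - t', z - z'⟫}

/-- NE-HPE sequences `(λ_k, z_k, z̃_k, ε_k)` for `T`, with parameter `σ`, distance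
generating function `w` (with gradient `gw`) and initial point `z_0 = zs 0 ∈ Z`. -/
structure NEHPE {E : Type*} [NormedAddCommGroup E] [InnerProductSpace ℝ E]
    (Z : Set E) (w : E → ℝ) (gw : E → E) (T : E → Set E) (σ : ℝ)
    (lam : ℕ → ℝ) (zs : ℕ → E) (zt : ℕ → E) (ε : ℕ → ℝ) : Prop where
  lam_pos : ∀ k, 1 ≤ k → 0 < lam k
  zs_mem : ∀ k, zs k ∈ Z
  zt_mem : ∀ k, 1 ≤ k → zt k ∈ Z
  eps_nonneg : ∀ k, 1 ≤ k → 0 ≤ ε k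
  incl : ∀ k, 1 ≤ k → (1 / lam k) • (gw (zs (k-1)) - gw (zs k)) ∈ epsEnl T (ε k) (zt k)
  err : ∀ k, 1 ≤ k →
    breg w gw (zs k) (zt k) + lam k * ε k ≤ σ * breg w gw (zs (k-1)) (zt k)

/-! The three-point identity turns the relative error condition of a single step into an inequality
saying that the Bregman distance to a solution `zstar` drops by at least the residual term
`λ_k (⟪r_k, z̃_k - zstar⟫ + ε_k)` plus `(1 - σ) (dw)_{z_{k-1}}(z̃_k)`. The first term is nonnegative
because `0 ∈ T zstar` and `r_k ∈ T^[ε_k](z̃_k)`, the second because Bregman distances of convex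
functions are. Telescoping therefore bounds both series by the initial distance `(dw)_{z_0}(zstar)`;
in particular the residual terms are summable and tend to zero. -/

theorem antitone_nat_of_succ_add_le {α : Type*} [AddZeroClass α] [Preorder α]
    [AddLeftMono α] {V a : ℕ → α} (h : ∀ k, V (k + 1) + a k ≤ V k)
    (ha : ∀ k, 0 ≤ a k) : Antitone V :=
  antitone_nat_of_succ_le fun k => (le_add_of_nonneg_right (ha k)).trans (h k)

theorem sum_range_le_of_succ_add_le {α : Type*} [AddCommGroup α] [PartialOrder α]
    [IsOrderedAddMonoid α] {V a : ℕ → α} (h : ∀ k, V (k + 1) + a k ≤ V k)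
    (hV : ∀ k, 0 ≤ V k) (n : ℕ) : ∑ k ∈ Finset.range n, a k ≤ V 0 :=
  calc ∑ k ∈ Finset.range n, a k
      ≤ ∑ k ∈ Finset.range n, (V k - V (k + 1)) :=
        Finset.sum_le_sum fun k _ => le_sub_iff_add_le'.2 (h k)
    _ = V 0 - V n := Finset.sum_range_sub' V n
    _ ≤ V 0 := sub_le_self _ (hV n)

theorem tendsto_zero_of_succ_add_le {V a : ℕ → ℝ} (h : ∀ k, V (k + 1) + a k ≤ V k)
    (ha : ∀ k, 0 ≤ a k) (hV : ∀ k, 0 ≤ V k) : Tendsto a atTop (nhds 0) :=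
  (summable_of_sum_range_le ha (sum_range_le_of_succ_add_le h hV)).tendsto_atTop_zero

section Bregman

variable {E : Type*} [NormedAddCommGroup E] [InnerProductSpace ℝ E]

/-- `gw` selects a subgradient of `w` relative to `Z` at each point of `Z`, i.e. a subgradient of
`w` plus the indicator function of `Z`; equivalently, the Bregman distances of `w` on `Z` are
nonnegative. -/
def IsSubgradientOn (Z : Set E) (w : E → ℝ) (gw : E → E) : Prop :=
  ∀ z ∈ Z, ∀ z' ∈ Z, w z + ⟪gw z, z' - z⟫ ≤ w z'

theorem IsSubgradientOn.breg_nonneg {Z : Set E} {w : E → ℝ} {gw : E → E}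
    (hw : IsSubgradientOn Z w gw) {z z' : E} (hz : z ∈ Z) (hz' : z' ∈ Z) :
    0 ≤ breg w gw z z' := by
  have h := hw z hz z' hz'
  unfold breg
  linarith

theorem IsDGF.isSubgradientOn [FiniteDimensional ℝ E] {Z : Set E} {p : Seminorm ℝ E} {m M : ℝ}
    {w : E → ℝ} {gw : E → E} (hw : IsDGF Z p m M w gw) (hm : 0 ≤ m) :
    IsSubgradientOn Z w gw := by
  intro z hz z' hz'
  have hmod : 0 ≤ m / 2 * p (z - z') ^ 2 := by positivity
  linarith [hw.strconv z hz z' hz']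

theorem breg_sub_breg_eq (w : E → ℝ) (gw : E → E) (y z u v : E) :
    breg w gw y v - breg w gw z v
      = breg w gw y u - breg w gw z u + ⟪gw y - gw z, u - v⟫ := by
  simp only [breg, inner_sub_left, inner_sub_right]
  ring

theorem mul_inner_add_le_breg_sub_breg {w : E → ℝ} {gw : E → E} {y z u : E} {σ l ε : ℝ}
    (hl : l ≠ 0) (herr : breg w gw z u + l * ε ≤ σ * breg w gw y u) (v : E) :
    l * (⟪(1 / l) • (gw y - gw z), u - v⟫ + ε)
      ≤ breg w gw y v - breg w gw z v - (1 - σ) * breg w gw y u := by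
  have hscale : l * ⟪(1 / l) • (gw y - gw z), u - v⟫ = ⟪gw y - gw z, u - v⟫ := by
    rw [real_inner_smul_left, ← mul_assoc, mul_one_div_cancel hl, one_mul]
  rw [mul_add, hscale, breg_sub_breg_eq w gw y z u v]
  linarith

theorem inner_add_nonneg_of_mem_epsEnl {T : E → Set E} {ε : ℝ} {t z v : E}
    (ht : t ∈ epsEnl T ε z) (hv : 0 ∈ T v) : 0 ≤ ⟪t, z - v⟫ + ε := by
  have h := ht v 0 hv
  rw [sub_zero] at h
  linarith

namespace NEHPE

variable {Z : Set E} {w : E → ℝ} {gw : E → E} {T : E → Set E} {σ : ℝ} {lam : ℕ → ℝ}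
  {zs zt : ℕ → E} {ε : ℕ → ℝ}

theorem residual_le (hseq : NEHPE Z w gw T σ lam zs zt ε) {k : ℕ} (hk : 1 ≤ k) (v : E) :
    lam k * (⟪(1 / lam k) • (gw (zs (k - 1)) - gw (zs k)), zt k - v⟫ + ε k)
      ≤ breg w gw (zs (k - 1)) v - breg w gw (zs k) v
        - (1 - σ) * breg w gw (zs (k - 1)) (zt k) :=
  mul_inner_add_le_breg_sub_breg (hseq.lam_pos k hk).ne' (hseq.err k hk) v

theorem residual_nonneg (hseq : NEHPE Z w gw T σ lam zs zt ε) {k : ℕ} (hk : 1 ≤ k) {v : E}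
    (hv : 0 ∈ T v) :
    0 ≤ lam k * (⟪(1 / lam k) • (gw (zs (k - 1)) - gw (zs k)), zt k - v⟫ + ε k) :=
  mul_nonneg (hseq.lam_pos k hk).le (inner_add_nonneg_of_mem_epsEnl (hseq.incl k hk) hv)

theorem one_sub_mul_breg_nonneg (hseq : NEHPE Z w gw T σ lam zs zt ε)
    (hw : IsSubgradientOn Z w gw) (hσ1 : σ ≤ 1) (k : ℕ) :
    0 ≤ (1 - σ) * breg w gw (zs k) (zt (k + 1)) :=
  mul_nonneg (sub_nonneg.2 hσ1) <|
    hw.breg_nonneg (hseq.zs_mem k) (hseq.zt_mem (k + 1) k.succ_pos)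

theorem breg_succ_add_residual_le (hseq : NEHPE Z w gw T σ lam zs zt ε)
    (hw : IsSubgradientOn Z w gw) (hσ1 : σ ≤ 1) (v : E) (k : ℕ) :
    breg w gw (zs (k + 1)) v
        + lam (k + 1) * (⟪(1 / lam (k + 1)) • (gw (zs k) - gw (zs (k + 1))), zt (k + 1) - v⟫
          + ε (k + 1))
      ≤ breg w gw (zs k) v := by
  have h := hseq.residual_le k.succ_pos v
  rw [Nat.succ_eq_add_one, Nat.add_sub_cancel] at h
  linarith [hseq.one_sub_mul_breg_nonneg hw hσ1 k]

theorem breg_succ_add_one_sub_mul_breg_le (hseq : NEHPE Z w gw T σ lam zs zt ε) {v : E}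
    (hv : 0 ∈ T v) (k : ℕ) :
    breg w gw (zs (k + 1)) v + (1 - σ) * breg w gw (zs k) (zt (k + 1)) ≤ breg w gw (zs k) v := by
  have h := (hseq.residual_nonneg k.succ_pos hv).trans (hseq.residual_le k.succ_pos v)
  rw [Nat.succ_eq_add_one, Nat.add_sub_cancel] at h
  linarith

end NEHPE

theorem stmt4_general {Z : Set E} {w : E → ℝ} {gw : E → E} (hw : IsSubgradientOn Z w gw)
    {T : E → Set E} {σ : ℝ} (hσ1 : σ ≤ 1) {lam : ℕ → ℝ} {zs zt : ℕ → E} {ε : ℕ → ℝ}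
    (hseq : NEHPE Z w gw T σ lam zs zt ε)
    {r : ℕ → E} (hr : ∀ k, r k = (1 / lam k) • (gw (zs (k - 1)) - gw (zs k)))
    {zstar : E} (hzstar_mem : zstar ∈ Z) (hzstar : (0 : E) ∈ T zstar) :
    (∀ k, 1 ≤ k →
        lam k * (⟪r k, zt k - zstar⟫ + ε k)
          ≤ breg w gw (zs (k - 1)) zstar - breg w gw (zs k) zstar
            - (1 - σ) * breg w gw (zs (k - 1)) (zt k)
        ∧ 0 ≤ lam k * (⟪r k, zt k - zstar⟫ + ε k))
    ∧ Antitone (fun k : ℕ => breg w gw (zs k) zstar)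
    ∧ Tendsto (fun k : ℕ => lam k * (⟪r k, zt k - zstar⟫ + ε k)) atTop (nhds 0)
    ∧ ∀ k, 1 ≤ k →
        (1 - σ) * ∑ i ∈ Finset.Icc 1 k, breg w gw (zs (i - 1)) (zt i)
          ≤ breg w gw (zs 0) zstar := by
  obtain rfl := funext hr
  have dist_nonneg k : 0 ≤ breg w gw (zs k) zstar := hw.breg_nonneg (hseq.zs_mem k) hzstar_mem
  have gain_nonneg := hseq.one_sub_mul_breg_nonneg hw hσ1
  have gain_descent := hseq.breg_succ_add_one_sub_mul_breg_le hzstar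
  have residual_descent := hseq.breg_succ_add_residual_le hw hσ1 zstar
  refine ⟨fun k hk => ⟨hseq.residual_le hk zstar, hseq.residual_nonneg hk hzstar⟩,
    antitone_nat_of_succ_add_le gain_descent gain_nonneg, ?_, fun k _ => ?_⟩
  · exact (tendsto_add_atTop_iff_nat 1).1 <| tendsto_zero_of_succ_add_le residual_descent
      (fun k => hseq.residual_nonneg k.succ_pos hzstar) dist_nonneg
  · rw [Finset.mul_sum, ← Finset.Ico_add_one_right_eq_Icc, Finset.sum_Ico_eq_sum_range]
    simpa only [Nat.add_sub_cancel, Nat.add_sub_cancel_left, add_comm 1] using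
      sum_range_le_of_succ_add_le gain_descent dist_nonneg k

end Bregman

/-- Key estimate with respect to a solution, monotonicity of the
Bregman distances, vanishing of the residual terms, and a summability bound. -/
theorem stmt4
    {E : Type*} [NormedAddCommGroup E] [InnerProductSpace ℝ E] [FiniteDimensional ℝ E]
    (Z : Set E) (p : Seminorm ℝ E) (m M : ℝ) (hm : 0 < m) (hmM : m ≤ M)
    (w : E → ℝ) (gw : E → E) (hw : IsDGF Z p m M w gw)
    (T : E → Set E) (hT : MaxMonoOp T)
    (hdom : ∀ z, (T z).Nonempty → z ∈ Z) (hsol : ∃ z, 0 ∈ T z)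
    (σ : ℝ) (hσ0 : 0 ≤ σ) (hσ1 : σ ≤ 1)
    (lam : ℕ → ℝ) (zs zt : ℕ → E) (ε : ℕ → ℝ)
    (hseq : NEHPE Z w gw T σ lam zs zt ε)
    (r : ℕ → E) (hr : ∀ k, r k = (1 / lam k) • (gw (zs (k - 1)) - gw (zs k)))
    (zstar : E) (hzstar : (0 : E) ∈ T zstar) :
    (∀ k, 1 ≤ k →
        lam k * (⟪r k, zt k - zstar⟫ + ε k)
          ≤ breg w gw (zs (k - 1)) zstar - breg w gw (zs k) zstar
            - (1 - σ) * breg w gw (zs (k - 1)) (zt k)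
        ∧ 0 ≤ lam k * (⟪r k, zt k - zstar⟫ + ε k))
    ∧ Antitone (fun k : ℕ => breg w gw (zs k) zstar)
    ∧ Tendsto (fun k : ℕ => lam k * (⟪r k, zt k - zstar⟫ + ε k)) atTop (nhds 0)
    ∧ ∀ k, 1 ≤ k →
        (1 - σ) * ∑ i ∈ Finset.Icc 1 k, breg w gw (zs (i - 1)) (zt i)
          ≤ breg w gw (zs 0) zstar :=
  stmt4_general (hw.isSubgradientOn hm.le) hσ1 hseq hr (hdom zstar ⟨0, hzstar⟩) hzstar
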